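/- Let E be a real inner product space and let e_x : ℝ → E be differentiable on [0,T] with T ≥ 0, and let e_y, e_z : ℝ → F, G be functions into normed spaces. Assume constants K_yx, L_y ≥ 0, K_yz > 0, μ ∈ ℝ, and Δ > 0 such that hypotheses (i)–(ii) of the finite-horizon bound hold (Lipschitz algebraic coupling and the one-sided differential inequality), e_x(0) = 0, and for all t ∈ [0,T], ‖e_z(t)‖ ≤ ε where 0 ≤ ε ≤ Δ / [(1 + K_yx)·L_y·K_yz·Φ(T,α) + K_yz] with α = μ + L_y·K_yx. Then ‖e_x(T)‖ + ‖e_y(T)‖ ≤ Δ. -/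

import Mathlib

open RealInnerProductSpace

/-- Horizon-dependent amplification factor: `Φ(T,α) = (e^{αT} − 1)/α` for `α ≠ 0`,
and `Φ(T,0) = T`. -/
noncomputable def Phi (T α : ℝ) : ℝ :=
  if α = 0 then T else (Real.exp (α * T) - 1) / α

/-!
A solution of `⟪f', f⟫ ≤ K ‖f‖² + ε ‖f‖` should satisfy `‖f‖' ≤ K ‖f‖ + ε`, but the norm need not be
differentiable where `f` vanishes, which happens here already at time `0`. Comparing `‖f‖²` with
the square of a strictly positive barrier avoids this: the inequality is then only used at points
where `‖f‖` equals the barrier. The barriers are Grönwall bounds with perturbed data, and the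
perturbation is sent to zero.

For the coupled errors, the algebraic constraint turns the one-sided inequality into one with
`K = μ + L_y * K_yx` and `ε` replaced by `L_y * K_yz * ε`.
-/

section Gronwall

open Set Filter Topology

theorem Phi_nonneg {T : ℝ} (hT : 0 ≤ T) (α : ℝ) : 0 ≤ Phi T α := by
  unfold Phi
  split_ifs
  · exact hT
  · rcases le_total 0 α with hα | hα
    · exact div_nonneg (sub_nonneg.2 (Real.one_le_exp (mul_nonneg hα hT))) hα
    · refine div_nonneg_of_nonpos (sub_nonpos.2 (Real.exp_le_one_iff.2 ?_)) hα
      exact mul_nonpos_of_nonpos_of_nonneg hα hT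

theorem gronwallBound_eq_mul_exp_add_mul_Phi (δ K ε t : ℝ) :
    gronwallBound δ K ε t = δ * Real.exp (K * t) + ε * Phi t K := by
  unfold gronwallBound Phi
  split_ifs with hK
  · simp [hK]
  · ring

theorem gronwallBound_pos {δ ε t : ℝ} (hδ : 0 < δ) (hε : 0 ≤ ε) (ht : 0 ≤ t) (K : ℝ) :
    0 < gronwallBound δ K ε t := by
  rw [gronwallBound_eq_mul_exp_add_mul_Phi]
  have := Phi_nonneg ht K
  positivity

theorem tendsto_gronwallBound_add_add (δ K ε t : ℝ) :
    Tendsto (fun η => gronwallBound (δ + η) K (ε + η) t) (𝓝[>] 0) (𝓝 (gronwallBound δ K ε t)) := by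
  simp only [gronwallBound_eq_mul_exp_add_mul_Phi]
  refine tendsto_nhdsWithin_of_tendsto_nhds (Continuous.tendsto' (by fun_prop) _ _ ?_)
  simp only [add_zero]

variable {E : Type*} [NormedAddCommGroup E] [InnerProductSpace ℝ E] {f f' : ℝ → E} {a b : ℝ}

theorem image_norm_le_of_inner_deriv_right_lt_deriv_boundary {B B' : ℝ → ℝ}
    (hf : ContinuousOn f (Icc a b)) (hf' : ∀ x ∈ Ico a b, HasDerivWithinAt f (f' x) (Ici x) x)
    (ha : ‖f a‖ ≤ B a) (hB₀ : ∀ x ∈ Icc a b, 0 ≤ B x) (hB : ContinuousOn B (Icc a b))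
    (hB' : ∀ x ∈ Ico a b, HasDerivWithinAt B (B' x) (Ici x) x)
    (bound : ∀ x ∈ Ico a b, ‖f x‖ = B x → ⟪f' x, f x⟫ < B' x * B x) :
    ∀ x ∈ Icc a b, ‖f x‖ ≤ B x := by
  intro x hx
  refine (pow_le_pow_iff_left₀ (norm_nonneg _) (hB₀ x hx) two_ne_zero).1 ?_
  refine image_le_of_deriv_right_lt_deriv_boundary' (hf.norm.pow 2)
    (fun t ht => (hf' t ht).norm_sq) (pow_le_pow_left₀ (norm_nonneg _) ha 2)
    (hB.pow 2) (fun t ht => (hB' t ht).pow 2) ?_ hx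
  intro t ht h_sq
  have h_contact : ‖f t‖ = B t :=
    (pow_left_inj₀ (norm_nonneg _) (hB₀ t (Ico_subset_Icc_self ht)) two_ne_zero).1 h_sq
  have h_inner := bound t ht h_contact
  rw [real_inner_comm] at h_inner
  simp only [Nat.cast_ofNat, Nat.add_one_sub_one, pow_one]
  linarith

theorem norm_le_gronwallBound_of_inner_deriv_right_le {δ K ε : ℝ}
    (hf : ContinuousOn f (Icc a b)) (hf' : ∀ x ∈ Ico a b, HasDerivWithinAt f (f' x) (Ici x) x)
    (ha : ‖f a‖ ≤ δ) (hε : 0 ≤ ε)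
    (bound : ∀ x ∈ Ico a b, ⟪f' x, f x⟫ ≤ K * ‖f x‖ ^ 2 + ε * ‖f x‖) :
    ∀ x ∈ Icc a b, ‖f x‖ ≤ gronwallBound δ K ε (x - a) := by
  intro x hx
  refine ge_of_tendsto (tendsto_gronwallBound_add_add δ K ε (x - a))
    (eventually_mem_nhdsWithin.mono fun η (hη : 0 < η) => ?_)
  have hδη : 0 < δ + η := add_pos_of_nonneg_of_pos ((norm_nonneg _).trans ha) hη
  have h_pos : ∀ t, a ≤ t → 0 < gronwallBound (δ + η) K (ε + η) (t - a) := fun t ht =>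
    gronwallBound_pos hδη (by positivity) (sub_nonneg.2 ht) K
  have h_deriv := fun t => hasDerivAt_gronwallBound_shift (δ + η) K (ε + η) t a
  refine image_norm_le_of_inner_deriv_right_lt_deriv_boundary hf hf' ?_
    (fun t ht => (h_pos t ht.1).le) (fun t _ => (h_deriv t).continuousAt.continuousWithinAt)
    (fun t _ => (h_deriv t).hasDerivWithinAt) (fun t ht h_contact => ?_) x hx
  · rw [sub_self, gronwallBound_x0]
    linarith
  · have h_norm_pos : 0 < ‖f t‖ := h_contact ▸ h_pos t ht.1
    rw [← h_contact]
    calc ⟪f' t, f t⟫ ≤ K * ‖f t‖ ^ 2 + ε * ‖f t‖ := bound t ht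
      _ < K * ‖f t‖ ^ 2 + ε * ‖f t‖ + η * ‖f t‖ := lt_add_of_pos_right _ (by positivity)
      _ = (K * ‖f t‖ + (ε + η)) * ‖f t‖ := by ring

end Gronwall

section CoupledErrors

open Set

variable {E F G : Type*} [NormedAddCommGroup E] [InnerProductSpace ℝ E] [Norm F] [Norm G]
  {T : ℝ} {e_x e_x' : ℝ → E} {e_y : ℝ → F} {e_z : ℝ → G} {K_yz K_yx L_y ε μ Δ : ℝ}

theorem norm_le_exp_add_Phi_of_coupling
    (hcont : ContinuousOn e_x (Icc 0 T))
    (hderiv : ∀ t ∈ Ico 0 T, HasDerivWithinAt e_x (e_x' t) (Ici t) t)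
    (hKyz : 0 ≤ K_yz) (hLy : 0 ≤ L_y) (hε : 0 ≤ ε)
    (h_coupling : ∀ t ∈ Ico 0 T, ‖e_y t‖ ≤ K_yz * ‖e_z t‖ + K_yx * ‖e_x t‖)
    (h_inner : ∀ t ∈ Ico 0 T, ⟪e_x' t, e_x t⟫ ≤ μ * ‖e_x t‖ ^ 2 + L_y * ‖e_y t‖ * ‖e_x t‖)
    (h_interface : ∀ t ∈ Ico 0 T, ‖e_z t‖ ≤ ε) :
    ∀ t ∈ Icc 0 T, ‖e_x t‖ ≤
      ‖e_x 0‖ * Real.exp ((μ + L_y * K_yx) * t) + L_y * K_yz * ε * Phi t (μ + L_y * K_yx) := by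
  intro t ht
  rw [← gronwallBound_eq_mul_exp_add_mul_Phi]
  have h_closed : ∀ s ∈ Ico 0 T,
      ⟪e_x' s, e_x s⟫ ≤ (μ + L_y * K_yx) * ‖e_x s‖ ^ 2 + L_y * K_yz * ε * ‖e_x s‖ := by
    intro s hs
    calc ⟪e_x' s, e_x s⟫ ≤ μ * ‖e_x s‖ ^ 2 + L_y * ‖e_y s‖ * ‖e_x s‖ := h_inner s hs
      _ ≤ μ * ‖e_x s‖ ^ 2 + L_y * (K_yz * ‖e_z s‖ + K_yx * ‖e_x s‖) * ‖e_x s‖ := by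
        gcongr
        exact h_coupling s hs
      _ ≤ μ * ‖e_x s‖ ^ 2 + L_y * (K_yz * ε + K_yx * ‖e_x s‖) * ‖e_x s‖ := by
        gcongr
        exact h_interface s hs
      _ = (μ + L_y * K_yx) * ‖e_x s‖ ^ 2 + L_y * K_yz * ε * ‖e_x s‖ := by ring
  simpa only [sub_zero] using norm_le_gronwallBound_of_inner_deriv_right_le hcont hderiv le_rfl
    (by positivity) h_closed t ht

theorem interface_requirement_sufficient_general (hT : 0 ≤ T)
    (hcont : ContinuousOn e_x (Icc 0 T))
    (hderiv : ∀ t ∈ Ico 0 T, HasDerivWithinAt e_x (e_x' t) (Ici t) t)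
    (hKyz : 0 < K_yz) (hKyx : 0 ≤ K_yx) (hLy : 0 ≤ L_y)
    (h_coupling : ∀ t ∈ Icc 0 T, ‖e_y t‖ ≤ K_yz * ‖e_z t‖ + K_yx * ‖e_x t‖)
    (h_inner : ∀ t ∈ Ico 0 T, ⟪e_x' t, e_x t⟫ ≤ μ * ‖e_x t‖ ^ 2 + L_y * ‖e_y t‖ * ‖e_x t‖)
    (h_init : e_x 0 = 0) (hε : 0 ≤ ε)
    (hε_max : ε ≤ Δ / ((1 + K_yx) * L_y * K_yz * Phi T (μ + L_y * K_yx) + K_yz))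
    (h_interface : ∀ t ∈ Icc 0 T, ‖e_z t‖ ≤ ε) :
    ‖e_x T‖ + ‖e_y T‖ ≤ Δ := by
  have hT_mem : T ∈ Icc 0 T := right_mem_Icc.2 hT
  have hΦ := Phi_nonneg hT (μ + L_y * K_yx)
  have hx : ‖e_x T‖ ≤ L_y * K_yz * ε * Phi T (μ + L_y * K_yx) := by
    simpa only [h_init, norm_zero, zero_mul, zero_add] using
      norm_le_exp_add_Phi_of_coupling hcont hderiv hKyz.le hLy hε
        (fun t ht => h_coupling t (Ico_subset_Icc_self ht)) h_inner
        (fun t ht => h_interface t (Ico_subset_Icc_self ht)) T hT_mem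
  have hy : ‖e_y T‖ ≤ K_yz * ε + K_yx * ‖e_x T‖ :=
    (h_coupling T hT_mem).trans (by gcongr; exact h_interface T hT_mem)
  calc ‖e_x T‖ + ‖e_y T‖ ≤ (1 + K_yx) * ‖e_x T‖ + K_yz * ε := by linarith
    _ ≤ (1 + K_yx) * (L_y * K_yz * ε * Phi T (μ + L_y * K_yx)) + K_yz * ε := by gcongr
    _ = ε * ((1 + K_yx) * L_y * K_yz * Phi T (μ + L_y * K_yx) + K_yz) := by ring
    _ ≤ Δ := (le_div_iff₀ (by positivity)).1 hε_max

end CoupledErrors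

/-- Sufficiency of the interface requirement `ε ≤ ε_max` for an admissible
simulator-level deviation `Δ`. -/
theorem interface_requirement_sufficient
    {E F G : Type*} [NormedAddCommGroup E] [InnerProductSpace ℝ E]
    [NormedAddCommGroup F] [NormedSpace ℝ F]
    [NormedAddCommGroup G] [NormedSpace ℝ G]
    (T : ℝ) (hT : 0 ≤ T)
    (e_x : ℝ → E) (e_y : ℝ → F) (e_z : ℝ → G)
    (hdiff : ∀ t ∈ Set.Icc (0 : ℝ) T, DifferentiableAt ℝ e_x t)
    (K_yz K_yx L_y ε μ Δ : ℝ)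
    (hKyz : 0 < K_yz) (hKyx : 0 ≤ K_yx) (hLy : 0 ≤ L_y) (hΔ : 0 < Δ)
    (h1 : ∀ t ∈ Set.Icc (0 : ℝ) T, ‖e_y t‖ ≤ K_yz * ‖e_z t‖ + K_yx * ‖e_x t‖)
    (h2 : ∀ t ∈ Set.Icc (0 : ℝ) T,
      ⟪deriv e_x t, e_x t⟫ ≤ μ * ‖e_x t‖ ^ 2 + L_y * ‖e_y t‖ * ‖e_x t‖)
    (h4 : e_x 0 = 0)
    (hε0 : 0 ≤ ε)
    (hεmax : ε ≤ Δ / ((1 + K_yx) * L_y * K_yz * Phi T (μ + L_y * K_yx) + K_yz))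
    (h3 : ∀ t ∈ Set.Icc (0 : ℝ) T, ‖e_z t‖ ≤ ε) :
    ‖e_x T‖ + ‖e_y T‖ ≤ Δ := by
  exact interface_requirement_sufficient_general hT
    (fun t ht => (hdiff t ht).continuousAt.continuousWithinAt)
    (fun t ht => (hdiff t (Set.Ico_subset_Icc_self ht)).hasDerivAt.hasDerivWithinAt)
    hKyz hKyx hLy h1 (fun t ht => h2 t (Set.Ico_subset_Icc_self ht)) h4 hε0 hεmax h3
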